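/- Let n ≥ 3, let s > 2, and let μ be a finite Borel measure on ℝⁿ with compact support such that I_s(μ) < ∞. Then for H^{n−1}-almost every unit vector e ∈ S^{n−1}, the function r ↦ μ̂(r·e) is Lebesgue integrable over ℝ; moreover ∫_{S^{n−1}} ∫_{|r| ≥ 1} |μ̂(r·e)| dr dH^{n−1}(e) ≤ C(n, s) · I_s(μ)^{1/2} for some constant C(n, s) > 0. -/

import Mathlib

open MeasureTheory Metric Set
open scoped ENNReal RealInnerProductSpace

/-- The topological support of a measure: points all of whose neighbourhoods
have positive measure. -/
def sptm (n : ℕ) (μ : MeasureTheory.Measure (EuclideanSpace ℝ (Fin n))) :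
    Set (EuclideanSpace ℝ (Fin n)) :=
  {x | ∀ r > 0, 0 < μ (Metric.ball x r)}

/-- The `s`-energy `I_s(μ) = ∬ |x-y|^{-s} dμ(x) dμ(y)` of a measure. -/
noncomputable def energyI (n : ℕ) (s : ℝ)
    (μ : MeasureTheory.Measure (EuclideanSpace ℝ (Fin n))) : ℝ≥0∞ :=
  ∫⁻ x, ∫⁻ y, (‖x - y‖₊ : ℝ≥0∞) ^ (-s) ∂μ ∂μ

/-- The mutual `u`-energy `I_u(μ, ν) = ∬ |x-y|^{-u} dμ(x) dν(y)` of two measures. -/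
noncomputable def mutualEnergyI (n : ℕ) (u : ℝ)
    (μ ν : MeasureTheory.Measure (EuclideanSpace ℝ (Fin n))) : ℝ≥0∞ :=
  ∫⁻ x, ∫⁻ y, (‖x - y‖₊ : ℝ≥0∞) ^ (-u) ∂ν ∂μ

/-- The Fourier transform `μ̂(ξ) = ∫ e^{-2πi⟨ξ,y⟩} dμ(y)` of a measure. -/
noncomputable def ftm (n : ℕ) (μ : MeasureTheory.Measure (EuclideanSpace ℝ (Fin n)))
    (ξ : EuclideanSpace ℝ (Fin n)) : ℂ :=
  ∫ y, Complex.exp ((-2 * Real.pi * ⟪ξ, y⟫ : ℝ) * Complex.I) ∂μ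

/-!
Write both `‖ξ‖ ^ (s - n)` and `‖x‖ ^ (-s)` as superpositions, over `t > 0`, of the Gaussians
`exp (-‖ξ‖² / 4t)` and `exp (-t‖x‖²)`. Parseval's identity matches these for each `t`, which gives
`∫ ‖ξ‖ ^ (s - n) ‖μ̂ ξ‖² dξ ≲ I_s(μ)`; as only inequalities are needed (the first superposition
diverges for `s ≥ n`), this works for every `s > 0`. By Cauchy–Schwarz,
`∫_{‖ξ‖ ≥ 1} ‖ξ‖ ^ (1 - n) ‖μ̂ ξ‖ dξ` is at most a multiple of `I_s(μ) ^ (1/2)` times the square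
root of `∫_{‖ξ‖ ≥ 1} ‖ξ‖ ^ (-(n + s - 2)) dξ`, which is finite because `s > 2`. In polar coordinates
the left side is the integral over the sphere, against the cone measure, of the radial `L¹` norms of
`μ̂`. Eilenberg's inequality applied to the norm bounds `H^{n-1}` by a multiple of the cone measure.
-/

open Filter Module
open scoped NNReal Pointwise

section HausdorffMeasure

variable {X : Type*} [EMetricSpace X] [MeasurableSpace X] [BorelSpace X]

lemma exists_cover_tsum_ediam_rpow_lt {d : ℝ} (hd : 0 < d) {A : Set X} {c : ℝ≥0∞}
    (hA : μH[d] A < c) {r : ℝ≥0∞} (hr : 0 < r) :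
    ∃ t : ℕ → Set X, A ⊆ ⋃ k, t k ∧ (∀ k, ediam (t k) ≤ r) ∧ ∑' k, ediam (t k) ^ d < c := by
  rw [Measure.hausdorffMeasure_apply] at hA
  obtain ⟨t, hAt, htr, hsum⟩ := by
    simpa only [iInf_lt_iff, exists_prop] using
      (le_iSup₂ (f := fun (r : ℝ≥0∞) (_ : 0 < r) => _) r hr).trans_lt hA
  refine ⟨t, hAt, htr, hsum.trans_le' (ENNReal.tsum_le_tsum fun k => ?_)⟩
  rcases (t k).eq_empty_or_nonempty with hk | hk
  · simp [hk, hd]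
  · simp [hk]

/-- Eilenberg's inequality for real-valued maps. -/
theorem lintegral_hausdorffMeasure_inter_preimage_le {f : X → ℝ} {K : ℝ≥0} (hf : LipschitzWith K f)
    {d : ℝ} (hd : 0 ≤ d) {A : Set X} (hA : μH[d + 1] A ≠ ∞) :
    ∫⁻ τ, μH[d] (A ∩ f ⁻¹' {τ}) ≤ K * μH[d + 1] A := by
  obtain ⟨ε, -, hε, hε0⟩ := exists_seq_strictAnti_tendsto' (zero_lt_one (α := ℝ≥0∞))
  choose t hAt htε hsum using fun j => exists_cover_tsum_ediam_rpow_lt (by positivity)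
    (ENNReal.lt_add_right hA (hε j).1.ne') (hε j).1
  set I : ℕ → ℕ → Set ℝ := fun j k => closure (f '' t j k)
  have hI (j k : ℕ) : MeasurableSet (I j k) := isClosed_closure.measurableSet
  have hslice (τ : ℝ) : μH[d] (A ∩ f ⁻¹' {τ}) ≤
      liminf (fun j => ∑' k, (I j k).indicator (fun _ => ediam (t j k) ^ d) τ) atTop := by
    refine (Measure.hausdorffMeasure_le_liminf_tsum (ι := fun j => {k // τ ∈ I j k}) d _ ε hε0
      (fun j k => t j k) (.of_forall fun j k => htε j k) (.of_forall fun j x hx => ?_)).trans_eq ?_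
    · obtain ⟨k, hk⟩ := mem_iUnion.1 (hAt j hx.1)
      exact mem_iUnion.2 ⟨⟨k, subset_closure ⟨x, hk, hx.2⟩⟩, hk⟩
    · exact congrArg (liminf · atTop) (funext fun j =>
        tsum_subtype {k | τ ∈ I j k} fun k => ediam (t j k) ^ d)
  have hpiece (j k : ℕ) :
      ∫⁻ τ, (I j k).indicator (fun _ => ediam (t j k) ^ d) τ ≤ K * ediam (t j k) ^ (d + 1) :=
    calc ∫⁻ τ, (I j k).indicator (fun _ => ediam (t j k) ^ d) τ
        = ediam (t j k) ^ d * volume (I j k) := lintegral_indicator_const (hI j k) _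
      _ ≤ ediam (t j k) ^ d * (K * ediam (t j k)) := by
          gcongr
          exact (Real.volume_le_diam _).trans ((ediam_closure _).trans_le (hf.ediam_image_le _))
      _ = K * ediam (t j k) ^ (d + 1) := by
          rw [ENNReal.rpow_add_of_nonneg _ _ hd zero_le_one, ENNReal.rpow_one, mul_left_comm]
  calc ∫⁻ τ, μH[d] (A ∩ f ⁻¹' {τ})
      ≤ ∫⁻ τ, liminf (fun j => ∑' k, (I j k).indicator (fun _ => ediam (t j k) ^ d) τ) atTop :=
        lintegral_mono hslice
    _ ≤ liminf (fun j => ∫⁻ τ, ∑' k, (I j k).indicator (fun _ => ediam (t j k) ^ d) τ) atTop :=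
        lintegral_liminf_le fun j =>
          .tsum fun k => measurable_const.indicator (hI j k)
    _ ≤ liminf (fun j => K * (μH[d + 1] A + ε j)) atTop := by
        refine liminf_le_liminf (.of_forall fun j => ?_)
        rw [lintegral_tsum fun k => (measurable_const.indicator (hI j k)).aemeasurable]
        refine (ENNReal.tsum_le_tsum (hpiece j)).trans ?_
        rw [ENNReal.tsum_mul_left]
        gcongr
        exact (hsum j).le
    _ = K * μH[d + 1] A := by
        have := ENNReal.Tendsto.const_mul (a := K) (hε0.const_add (μH[d + 1] A))
          (.inr ENNReal.coe_ne_top)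
        rw [add_zero] at this
        exact this.liminf_eq

lemma setLIntegral_hausdorffMeasure_eq {S : Set X} (hS : MeasurableSet S) {d : ℝ} (hd : 0 ≤ d)
    (f : X → ℝ≥0∞) : ∫⁻ x in S, f x ∂μH[d] = ∫⁻ x : S, f x ∂μH[d] := by
  rw [← (MeasurableEmbedding.subtype_coe hS).lintegral_map,
    isometry_subtype_coe.map_hausdorffMeasure (.inl hd), Subtype.range_coe]

end HausdorffMeasure

section Sphere

variable {E : Type*} [NormedAddCommGroup E] [NormedSpace ℝ E] [FiniteDimensional ℝ E]
  [MeasurableSpace E] [BorelSpace E] {d : ℕ}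

lemma isAddHaarMeasure_hausdorffMeasure_of_finrank_eq (hd : finrank ℝ E = d + 1) :
    (μH[d + 1] : Measure E).IsAddHaarMeasure := by
  exact_mod_cast hd ▸ isAddHaarMeasure_hausdorffMeasure (E := E)

lemma setLIntegral_Ioo_zero_one_ofReal_pow (d : ℕ) :
    ∫⁻ τ in Ioo (0 : ℝ) 1, ENNReal.ofReal (τ ^ d) = (d + 1 : ℝ≥0∞)⁻¹ := by
  rw [setLIntegral_congr Ioo_ae_eq_Ioc, ← ofReal_integral_eq_lintegral_ofReal
    (intervalIntegral.intervalIntegrable_pow d).1, ← intervalIntegral.integral_of_le zero_le_one,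
    integral_pow]
  · rw [one_pow, zero_pow d.succ_ne_zero, sub_zero, one_div,
      ENNReal.ofReal_inv_of_pos (by positivity)]
    norm_cast
  · filter_upwards [ae_restrict_mem measurableSet_Ioc] with τ hτ using pow_nonneg hτ.1.le d

theorem hausdorffMeasure_sphere_le_toSphere (hd : finrank ℝ E = d + 1) :
    (μH[d] : Measure (sphere (0 : E) 1)) ≤ (μH[d + 1] : Measure E).toSphere := by
  -- Eilenberg's inequality for the norm on the cone over `A`, whose slice at height `τ` is `τ • A`.
  have := isAddHaarMeasure_hausdorffMeasure_of_finrank_eq hd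
  refine Measure.le_iff.2 fun A hA => ?_
  set cone : Set E := Ioo (0 : ℝ) 1 • (Subtype.val '' A)
  have hcone : cone ⊆ ball 0 1 := by
    rintro _ ⟨τ, hτ, _, ⟨e, -, rfl⟩, rfl⟩
    simpa [norm_smul, abs_of_pos hτ.1] using hτ.2
  have hcone_top : μH[d + 1] cone ≠ ∞ := (measure_mono hcone).trans_lt measure_ball_lt_top |>.ne
  have hslice {τ : ℝ} (hτ : τ ∈ Ioo (0 : ℝ) 1) :
      ENNReal.ofReal (τ ^ d) * μH[d] A ≤ μH[d] (cone ∩ norm ⁻¹' {τ}) :=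
    calc ENNReal.ofReal (τ ^ d) * μH[d] A = μH[d] (τ • (Subtype.val '' A)) := by
          rw [Measure.hausdorffMeasure_smul₀ d.cast_nonneg hτ.1.ne', NNReal.rpow_natCast,
            isometry_subtype_coe.hausdorffMeasure_image (.inl d.cast_nonneg), ENNReal.smul_def,
            smul_eq_mul, ENNReal.coe_pow, ENNReal.ofReal_pow hτ.1.le, ← enorm_eq_nnnorm,
            Real.enorm_of_nonneg hτ.1.le]
      _ ≤ μH[d] (cone ∩ norm ⁻¹' {τ}) := by
          refine measure_mono (subset_inter (smul_set_subset_smul hτ) ?_)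
          rintro _ ⟨_, ⟨e, -, rfl⟩, rfl⟩
          simp [norm_smul, abs_of_pos hτ.1]
  calc μH[d] A = (d + 1) * ∫⁻ τ in Ioo (0 : ℝ) 1, ENNReal.ofReal (τ ^ d) * μH[d] A := by
        rw [lintegral_mul_const _ (by fun_prop), setLIntegral_Ioo_zero_one_ofReal_pow, ← mul_assoc,
          ENNReal.mul_inv_cancel (by simp) (by finiteness), one_mul]
    _ ≤ (d + 1) * ∫⁻ τ, μH[d] (cone ∩ norm ⁻¹' {τ}) := by
        refine mul_le_mul_right ?_ _
        exact (setLIntegral_mono' measurableSet_Ioo fun τ hτ => hslice hτ).trans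
          (setLIntegral_le_lintegral _ _)
    _ ≤ (d + 1) * μH[d + 1] cone := by
        gcongr
        simpa using lintegral_hausdorffMeasure_inter_preimage_le lipschitzWith_one_norm
          d.cast_nonneg hcone_top
    _ = (μH[d + 1] : Measure E).toSphere A := by
        rw [Measure.toSphere_apply' _ hA, hd, Nat.cast_add_one]

theorem lintegral_toSphere_lintegral_Ioi (μ : Measure E) [μ.IsAddHaarMeasure]
    (hd : finrank ℝ E = d + 1) {f : E → ℝ≥0∞} (hf : Measurable f) :
    ∫⁻ e, (∫⁻ r in Ioi (0 : ℝ), ENNReal.ofReal (r ^ d) * f (r • e.1)) ∂μ.toSphere =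
      ∫⁻ x, f x ∂μ := by
  have : Nontrivial E := nontrivial_of_finrank_pos (R := ℝ) (hd ▸ d.succ_pos)
  set g : sphere (0 : E) 1 × Ioi (0 : ℝ) → ℝ≥0∞ := fun p => f (p.2.1 • p.1.1)
  have hg : Measurable g := by fun_prop
  calc ∫⁻ e, (∫⁻ r in Ioi (0 : ℝ), ENNReal.ofReal (r ^ d) * f (r • e.1)) ∂μ.toSphere
      = ∫⁻ e, (∫⁻ r, g (e, r) ∂Measure.volumeIoiPow (finrank ℝ E - 1)) ∂μ.toSphere := by
        refine lintegral_congr fun e => ?_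
        rw [Measure.volumeIoiPow, hd, Nat.add_sub_cancel,
          lintegral_withDensity_eq_lintegral_mul _ (by fun_prop) (by fun_prop)]
        exact (lintegral_subtype_comap measurableSet_Ioi
          fun r : ℝ => ENNReal.ofReal (r ^ d) * f (r • e.1)).symm
    _ = ∫⁻ x, g (homeomorphUnitSphereProd E x) ∂μ.comap Subtype.val := by
        rw [← lintegral_prod _ hg.aemeasurable,
          μ.measurePreserving_homeomorphUnitSphereProd.lintegral_comp hg]
    _ = ∫⁻ x : ({0}ᶜ : Set E), f x.1 ∂μ.comap Subtype.val := by
        refine lintegral_congr fun x => ?_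
        have hx : ‖x.1‖ ≠ 0 := norm_ne_zero_iff.2 x.2
        simp [g, smul_smul, hx]
    _ = ∫⁻ x, f x ∂μ := by
        rw [lintegral_subtype_comap (measurableSet_singleton _).compl, restrict_compl_singleton]

theorem lintegral_sphere_lintegral_Ici_le (hd : finrank ℝ E = d + 1) {f : E → ℝ≥0∞}
    (hf : Measurable f) :
    ∫⁻ e : sphere (0 : E) 1, (∫⁻ r in Ici (1 : ℝ), f (r • e.1)) ∂μH[d] ≤
      ∫⁻ x in {x | 1 ≤ ‖x‖}, ‖x‖ₑ ^ (-d : ℝ) * f x ∂μH[d + 1] := by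
  have := isAddHaarMeasure_hausdorffMeasure_of_finrank_eq hd
  set g : E → ℝ≥0∞ := indicator {x | 1 ≤ ‖x‖} fun x => ‖x‖ₑ ^ (-d : ℝ) * f x
  have hmeas : MeasurableSet {x : E | 1 ≤ ‖x‖} := measurableSet_le measurable_const measurable_norm
  have hg : Measurable g := by
    refine Measurable.indicator (by fun_prop) hmeas
  have hfg (e : sphere (0 : E) 1) {r : ℝ} (hr : 1 ≤ r) :
      f (r • e.1) = ENNReal.ofReal (r ^ d) * g (r • e.1) := by
    have hr0 : 0 < r := zero_lt_one.trans_le hr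
    have hnorm : ‖r • e.1‖ = r := by
      rw [norm_smul, norm_eq_of_mem_sphere, mul_one, Real.norm_of_nonneg hr0.le]
    have hpow : ENNReal.ofReal (r ^ d) ≠ 0 := by simpa using pow_pos hr0 d
    have hmem : r • e.1 ∈ {x : E | 1 ≤ ‖x‖} := hr.trans_eq hnorm.symm
    rw [show g (r • e.1) = _ from indicator_of_mem hmem _, ENNReal.rpow_neg, ENNReal.rpow_natCast,
      ← ofReal_norm, hnorm, ← ENNReal.ofReal_pow hr0.le, ← mul_assoc,
      ENNReal.mul_inv_cancel hpow ENNReal.ofReal_ne_top, one_mul]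
  calc ∫⁻ e : sphere (0 : E) 1, (∫⁻ r in Ici (1 : ℝ), f (r • e.1)) ∂μH[d]
      ≤ ∫⁻ e, (∫⁻ r in Ioi (0 : ℝ), ENNReal.ofReal (r ^ d) * g (r • e.1))
          ∂(μH[d + 1] : Measure E).toSphere := by
        refine lintegral_mono' (hausdorffMeasure_sphere_le_toSphere hd) fun e => ?_
        rw [setLIntegral_congr_fun measurableSet_Ici fun r hr => hfg e hr]
        exact lintegral_mono_set (Ici_subset_Ioi.2 zero_lt_one)
    _ = ∫⁻ x in {x | 1 ≤ ‖x‖}, ‖x‖ₑ ^ (-d : ℝ) * f x ∂μH[d + 1] := by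
        rw [lintegral_toSphere_lintegral_Ioi _ hd hg, lintegral_indicator hmeas]

end Sphere

section CharFun

variable {V : Type*} [NormedAddCommGroup V] [InnerProductSpace ℝ V] [MeasurableSpace V]
  [BorelSpace V] [SecondCountableTopology V]

lemma integral_charFun_comm (μ ν : Measure V) [IsFiniteMeasure μ] [IsFiniteMeasure ν] :
    ∫ ξ, charFun μ ξ ∂ν = ∫ x, charFun ν x ∂μ := by
  simp only [charFun_apply]
  rw [integral_integral_swap]
  · simp only [real_inner_comm]
  · refine (integrable_const (1 : ℝ)).mono' (Continuous.aestronglyMeasurable ?_) ?_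
    · simp only [Function.uncurry_def]
      fun_prop
    · exact ae_of_all _ fun p => (Complex.norm_exp_ofReal_mul_I _).le

lemma charFun_conv_map_neg (μ : Measure V) [IsFiniteMeasure μ] (ξ : V) :
    charFun (μ ∗ μ.map Neg.neg) ξ = (‖charFun μ ξ‖ ^ 2 : ℝ) := by
  have hneg : charFun (μ.map Neg.neg) ξ = charFun μ (-ξ) := by
    simpa using charFun_map_smul (μ := μ) (-1) ξ
  rw [charFun_conv, hneg, charFun_neg, Complex.mul_conj']
  norm_cast

/-- Parseval's identity: `‖charFun μ‖ ^ 2` is the characteristic function of the difference of two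
independent copies of `μ`. -/
theorem integral_sq_norm_charFun (μ ν : Measure V) [IsFiniteMeasure μ] [IsFiniteMeasure ν] :
    ((∫ ξ, ‖charFun μ ξ‖ ^ 2 ∂ν : ℝ) : ℂ) = ∫ x, ∫ y, charFun ν (x - y) ∂μ ∂μ := by
  have hint (ρ : Measure V) [IsFiniteMeasure ρ] : Integrable (charFun ν) ρ :=
    .of_bound stronglyMeasurable_charFun.aestronglyMeasurable _ (ae_of_all _ norm_charFun_le)
  rw [← integral_complex_ofReal]
  simp_rw [← charFun_conv_map_neg]
  rw [integral_charFun_comm, integral_conv (hint _)]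
  refine integral_congr_ae (ae_of_all _ fun x => ?_)
  simp only [sub_eq_add_neg]
  rw [integral_map measurable_neg.aemeasurable]
  exact (stronglyMeasurable_charFun.comp_measurable (by fun_prop)).aestronglyMeasurable

end CharFun

section Kernel

lemma lintegral_rpow_mul_exp_neg_mul_sq_le {s : ℝ} (hs : 0 < s) (r : ℝ≥0) :
    ∫⁻ t in Ioi (0 : ℝ), ENNReal.ofReal (t ^ (s / 2 - 1) * Real.exp (-(r ^ 2 * t))) ≤
      ENNReal.ofReal (Real.Gamma (s / 2)) * (r : ℝ≥0∞) ^ (-s) := by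
  have hΓ : 0 < Real.Gamma (s / 2) := Real.Gamma_pos_of_pos (by positivity)
  rcases eq_or_ne r 0 with rfl | hr
  · simp [ENNReal.zero_rpow_of_neg (neg_lt_zero.2 hs), ENNReal.mul_top, hΓ]
  have hr2 : (0 : ℝ) < r ^ 2 := by positivity
  have h := Real.integral_rpow_mul_exp_neg_mul_Ioi (half_pos hs) hr2
  have hpow : (1 / (r : ℝ) ^ 2) ^ (s / 2) = (r : ℝ) ^ (-s) := by
    rw [one_div, Real.inv_rpow hr2.le, ← Real.rpow_natCast_mul r.coe_nonneg,
      Real.rpow_neg r.coe_nonneg]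
    congr 2
    push_cast
    ring
  rw [hpow] at h
  rw [← ofReal_integral_eq_lintegral_ofReal, h, mul_comm, ENNReal.ofReal_mul hΓ.le,
    ← ENNReal.ofReal_rpow_of_pos (by positivity), ENNReal.ofReal_coe_nnreal]
  · exact .of_integral_ne_zero (h ▸ by positivity)
  · filter_upwards [ae_restrict_mem measurableSet_Ioi] with t (ht : 0 < t)
    positivity

lemma le_lintegral_rpow_mul_exp_neg_div {a : ℝ} (ha : 0 < a) (p : ℝ) :
    ENNReal.ofReal (Real.exp (-1) * 2 ^ (-|p - 1|) * a ^ p) ≤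
      ∫⁻ t in Ioi (0 : ℝ), ENNReal.ofReal (t ^ (p - 1) * Real.exp (-(a / t))) := by
  have hbound {t : ℝ} (ht : t ∈ Ioc a (2 * a)) :
      2 ^ (-|p - 1|) * a ^ (p - 1) * Real.exp (-1) ≤ t ^ (p - 1) * Real.exp (-(a / t)) := by
    obtain ⟨hat, hta⟩ := ht
    have ht0 : 0 < t := ha.trans hat
    have hdiv : 1 ≤ t / a := (one_le_div ha).2 hat.le
    have hquot : 2 ^ (-|p - 1|) ≤ (t / a) ^ (p - 1) :=
      calc (2 : ℝ) ^ (-|p - 1|) ≤ (t / a) ^ (-|p - 1|) :=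
            Real.rpow_le_rpow_of_nonpos (by positivity) ((div_le_iff₀ ha).2 hta) (by simp)
        _ ≤ (t / a) ^ (p - 1) := Real.rpow_le_rpow_of_exponent_le hdiv (neg_abs_le _)
    rw [Real.div_rpow ht0.le ha.le, le_div_iff₀ (by positivity)] at hquot
    gcongr
    exact (div_le_one ht0).2 hat.le
  calc ENNReal.ofReal (Real.exp (-1) * 2 ^ (-|p - 1|) * a ^ p)
      = ∫⁻ _ in Ioc a (2 * a),
          ENNReal.ofReal (2 ^ (-|p - 1|) * a ^ (p - 1) * Real.exp (-1)) := by
        rw [setLIntegral_const, Real.volume_Ioc, ← ENNReal.ofReal_mul (by positivity),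
          Real.rpow_sub_one ha.ne']
        congr 1
        field_simp
        ring
    _ ≤ ∫⁻ t in Ioc a (2 * a), ENNReal.ofReal (t ^ (p - 1) * Real.exp (-(a / t))) :=
        setLIntegral_mono' measurableSet_Ioc fun t ht => ENNReal.ofReal_le_ofReal (hbound ht)
    _ ≤ ∫⁻ t in Ioi (0 : ℝ), ENNReal.ofReal (t ^ (p - 1) * Real.exp (-(a / t))) :=
        lintegral_mono_set fun t ht => ha.trans ht.1

end Kernel

section Gaussian

variable {V : Type*} [NormedAddCommGroup V] [InnerProductSpace ℝ V] [FiniteDimensional ℝ V]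
  [MeasurableSpace V] [BorelSpace V]

lemma integrable_exp_neg_sq_norm_div {t : ℝ} (ht : 0 < t) :
    Integrable fun ξ : V => Real.exp (-(‖ξ‖ ^ 2 / (4 * t))) := by
  refine .of_integral_ne_zero ?_
  have := GaussianFourier.integral_rexp_neg_mul_sq_norm (V := V) (b := (4 * t)⁻¹) (by positivity)
  simp only [neg_mul, inv_mul_eq_div] at this
  rw [this]
  positivity

lemma charFun_withDensity_exp_neg_sq_norm_div {t : ℝ} (ht : 0 < t) (x : V) :
    charFun (volume.withDensity fun ξ : V => ENNReal.ofReal (Real.exp (-(‖ξ‖ ^ 2 / (4 * t))))) x =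
      ((4 * Real.pi * t) ^ (finrank ℝ V / 2 : ℝ) * Real.exp (-(‖x‖ ^ 2 * t)) : ℝ) := by
  have hb : 0 < (((4 * t)⁻¹ : ℝ) : ℂ).re := by
    rw [Complex.ofReal_re]
    positivity
  have h := GaussianFourier.integral_cexp_neg_mul_sq_norm_add (V := V) hb Complex.I x
  rw [charFun_apply, integral_withDensity_eq_integral_toReal_smul (by fun_prop) (by simp)]
  push_cast [Complex.ofReal_cpow (show 0 ≤ 4 * Real.pi * t by positivity)]
  convert h using 2 with ξ
  · ext ξ
    rw [ENNReal.toReal_ofReal (by positivity), Complex.real_smul, Complex.ofReal_exp,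
      ← Complex.exp_add, real_inner_comm]
    push_cast
    ring_nf
  · congr 1
    push_cast
    field_simp
  · push_cast
    rw [Complex.I_sq]
    field_simp

theorem lintegral_sq_enorm_charFun_mul_exp (μ : Measure V) [IsFiniteMeasure μ] {t : ℝ}
    (ht : 0 < t) :
    ∫⁻ ξ, ‖charFun μ ξ‖ₑ ^ 2 * ENNReal.ofReal (Real.exp (-(‖ξ‖ ^ 2 / (4 * t)))) =
      ENNReal.ofReal ((4 * Real.pi * t) ^ (finrank ℝ V / 2 : ℝ)) *
        ∫⁻ x, ∫⁻ y, ENNReal.ofReal (Real.exp (-(‖x - y‖ ^ 2 * t))) ∂μ ∂μ := by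
  set γ : Measure V :=
    volume.withDensity fun ξ => ENNReal.ofReal (Real.exp (-(‖ξ‖ ^ 2 / (4 * t))))
  have : IsFiniteMeasure γ :=
    isFiniteMeasure_withDensity_ofReal (integrable_exp_neg_sq_norm_div ht).2
  have hsq : Integrable (fun ξ => ‖charFun μ ξ‖ ^ 2) γ := by
    refine .of_bound (by fun_prop) (μ.real univ ^ 2) (ae_of_all _ fun ξ => ?_)
    rw [norm_pow, norm_norm]
    gcongr
    exact norm_charFun_le ξ
  have hexp : Integrable (fun p : V × V => Real.exp (-(‖p.1 - p.2‖ ^ 2 * t))) (μ.prod μ) :=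
    .of_bound (by fun_prop) 1 <| ae_of_all _ fun p => by
      rw [Real.norm_of_nonneg (by positivity), Real.exp_le_one_iff, neg_nonpos]
      positivity
  have hparseval := integral_sq_norm_charFun μ γ
  simp only [γ, charFun_withDensity_exp_neg_sq_norm_div ht, integral_complex_ofReal,
    Complex.ofReal_inj, integral_const_mul] at hparseval
  rw [integral_integral hexp] at hparseval
  have h := congrArg ENNReal.ofReal hparseval
  rw [ofReal_integral_eq_lintegral_ofReal hsq (ae_of_all _ fun _ => by positivity),
    lintegral_withDensity_eq_lintegral_mul _ (by fun_prop) (by fun_prop),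
    ENNReal.ofReal_mul (by positivity),
    ofReal_integral_eq_lintegral_ofReal hexp (ae_of_all _ fun _ => by positivity),
    lintegral_prod _ (by fun_prop)] at h
  rw [← h]
  refine lintegral_congr fun ξ => ?_
  rw [Pi.mul_apply, mul_comm, ENNReal.ofReal_pow (norm_nonneg _), ofReal_norm]

end Gaussian

section Energy

/-- The Riesz `s`-energy of a measure on a normed group; `energyI n` is the case of `ℝⁿ`. -/
noncomputable def rieszEnergy {V : Type*} [NormedAddCommGroup V] [MeasurableSpace V] (s : ℝ)
    (μ : Measure V) : ℝ≥0∞ :=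
  ∫⁻ x, ∫⁻ y, ‖x - y‖ₑ ^ (-s) ∂μ ∂μ

section NormedAddCommGroup

variable {V : Type*} [NormedAddCommGroup V]

variable (V) in
lemma exists_enorm_rpow_le_lintegral_rpow_mul_exp (q : ℝ) :
    ∃ C : ℝ≥0, ∀ ξ : V, ξ ≠ 0 → ‖ξ‖ₑ ^ q ≤ C * ∫⁻ t in Ioi (0 : ℝ),
      ENNReal.ofReal (t ^ (q / 2 - 1) * Real.exp (-(‖ξ‖ ^ 2 / (4 * t)))) := by
  set c : ℝ := Real.exp (-1) * 2 ^ (-|q / 2 - 1|)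
  have hc : 0 < c := by positivity
  refine ⟨(c⁻¹ * 4 ^ (q / 2)).toNNReal, fun ξ hξ => ?_⟩
  have hξ0 : 0 < ‖ξ‖ := norm_pos_iff.2 hξ
  have hpow : ‖ξ‖ ^ q = c⁻¹ * 4 ^ (q / 2) * (c * (‖ξ‖ ^ 2 / 4) ^ (q / 2)) := by
    rw [Real.div_rpow (by positivity) (by positivity), ← Real.rpow_natCast_mul hξ0.le,
      Nat.cast_ofNat, mul_div_cancel₀ _ two_ne_zero]
    field_simp
  rw [← ofReal_norm, ENNReal.ofReal_rpow_of_pos hξ0, hpow, ENNReal.ofReal_mul (by positivity)]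
  simp_rw [← div_div]
  exact mul_le_mul_right (le_lintegral_rpow_mul_exp_neg_div (by positivity) _) _

variable [MeasurableSpace V]

lemma exists_lintegral_enorm_rpow_mul_le [OpensMeasurableSpace V] (μ : Measure V) [SFinite μ]
    [NullSingletonClass μ] (q : ℝ) :
    ∃ C : ℝ≥0, ∀ f : V → ℝ≥0∞, Measurable f →
      ∫⁻ ξ, ‖ξ‖ₑ ^ q * f ξ ∂μ ≤ C * ∫⁻ t in Ioi (0 : ℝ), ENNReal.ofReal (t ^ (q / 2 - 1)) *
        ∫⁻ ξ, f ξ * ENNReal.ofReal (Real.exp (-(‖ξ‖ ^ 2 / (4 * t)))) ∂μ := by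
  obtain ⟨C, hC⟩ := exists_enorm_rpow_le_lintegral_rpow_mul_exp V q
  refine ⟨C, fun f hf => ?_⟩
  set k : V → ℝ → ℝ≥0∞ := fun ξ t =>
    ENNReal.ofReal (t ^ (q / 2 - 1) * Real.exp (-(‖ξ‖ ^ 2 / (4 * t))))
  calc ∫⁻ ξ, ‖ξ‖ₑ ^ q * f ξ ∂μ
      ≤ ∫⁻ ξ, (C * ∫⁻ t in Ioi (0 : ℝ), k ξ t * f ξ) ∂μ := by
        refine lintegral_mono_ae ?_
        filter_upwards [compl_mem_ae_iff.2 (measure_singleton (0 : V))] with ξ hξ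
        rw [lintegral_mul_const _ (by fun_prop), ← mul_assoc]
        gcongr
        exact hC ξ hξ
    _ = C * ∫⁻ t in Ioi (0 : ℝ), (∫⁻ ξ, k ξ t * f ξ ∂μ) := by
        rw [lintegral_const_mul' _ _ ENNReal.coe_ne_top, lintegral_lintegral_swap (by fun_prop)]
    _ = C * ∫⁻ t in Ioi (0 : ℝ), ENNReal.ofReal (t ^ (q / 2 - 1)) *
          ∫⁻ ξ, f ξ * ENNReal.ofReal (Real.exp (-(‖ξ‖ ^ 2 / (4 * t)))) ∂μ := by
        congr 1
        refine setLIntegral_congr_fun measurableSet_Ioi fun t (ht : 0 < t) => ?_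
        simp only [k, ENNReal.ofReal_mul (show 0 ≤ t ^ (q / 2 - 1) by positivity), mul_assoc]
        rw [lintegral_const_mul' _ _ ENNReal.ofReal_ne_top]
        simp only [mul_comm]

lemma lintegral_lintegral_rpow_mul_exp_neg_le_rieszEnergy [BorelSpace V]
    [SecondCountableTopology V] {s : ℝ} (hs : 0 < s) (μ : Measure V) [SFinite μ] :
    ∫⁻ t in Ioi (0 : ℝ), ENNReal.ofReal (t ^ (s / 2 - 1)) *
        ∫⁻ x, ∫⁻ y, ENNReal.ofReal (Real.exp (-(‖x - y‖ ^ 2 * t))) ∂μ ∂μ ≤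
      ENNReal.ofReal (Real.Gamma (s / 2)) * rieszEnergy s μ :=
  calc ∫⁻ t in Ioi (0 : ℝ), ENNReal.ofReal (t ^ (s / 2 - 1)) *
        ∫⁻ x, ∫⁻ y, ENNReal.ofReal (Real.exp (-(‖x - y‖ ^ 2 * t))) ∂μ ∂μ
      = ∫⁻ t in Ioi (0 : ℝ), (∫⁻ p, ENNReal.ofReal
          (t ^ (s / 2 - 1) * Real.exp (-(‖p.1 - p.2‖ ^ 2 * t))) ∂μ.prod μ) := by
        refine setLIntegral_congr_fun measurableSet_Ioi fun t (ht : 0 < t) => ?_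
        simp only [ENNReal.ofReal_mul (show 0 ≤ t ^ (s / 2 - 1) by positivity)]
        rw [lintegral_const_mul _ (by fun_prop), lintegral_prod _ (by fun_prop)]
    _ = ∫⁻ p, (∫⁻ t in Ioi (0 : ℝ), ENNReal.ofReal
          (t ^ (s / 2 - 1) * Real.exp (-(‖p.1 - p.2‖ ^ 2 * t)))) ∂μ.prod μ :=
        lintegral_lintegral_swap (by fun_prop)
    _ ≤ ∫⁻ p, ENNReal.ofReal (Real.Gamma (s / 2)) * ‖p.1 - p.2‖ₑ ^ (-s) ∂μ.prod μ :=
        lintegral_mono fun p => lintegral_rpow_mul_exp_neg_mul_sq_le hs ‖p.1 - p.2‖₊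
    _ = ENNReal.ofReal (Real.Gamma (s / 2)) * rieszEnergy s μ := by
        rw [lintegral_const_mul _ (by fun_prop), lintegral_prod _ (by fun_prop), rieszEnergy]

end NormedAddCommGroup

variable {V : Type*} [NormedAddCommGroup V] [InnerProductSpace ℝ V] [FiniteDimensional ℝ V]
  [MeasurableSpace V] [BorelSpace V]

lemma lintegral_rpow_mul_lintegral_sq_enorm_charFun_mul_exp (s : ℝ) (μ : Measure V)
    [IsFiniteMeasure μ] :
    ∫⁻ t in Ioi (0 : ℝ), ENNReal.ofReal (t ^ ((s - finrank ℝ V) / 2 - 1)) *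
        ∫⁻ ξ, ‖charFun μ ξ‖ₑ ^ 2 * ENNReal.ofReal (Real.exp (-(‖ξ‖ ^ 2 / (4 * t)))) =
      ENNReal.ofReal ((4 * Real.pi) ^ (finrank ℝ V / 2 : ℝ)) *
        ∫⁻ t in Ioi (0 : ℝ), ENNReal.ofReal (t ^ (s / 2 - 1)) *
          ∫⁻ x, ∫⁻ y, ENNReal.ofReal (Real.exp (-(‖x - y‖ ^ 2 * t))) ∂μ ∂μ := by
  rw [← lintegral_const_mul' _ _ ENNReal.ofReal_ne_top]
  refine setLIntegral_congr_fun measurableSet_Ioi fun t (ht : 0 < t) => ?_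
  have hpow : t ^ ((s - finrank ℝ V) / 2 - 1) * (4 * Real.pi * t) ^ (finrank ℝ V / 2 : ℝ) =
      (4 * Real.pi) ^ (finrank ℝ V / 2 : ℝ) * t ^ (s / 2 - 1) := by
    rw [Real.mul_rpow (by positivity) ht.le, mul_left_comm, ← Real.rpow_add ht]
    ring_nf
  simp only [lintegral_sq_enorm_charFun_mul_exp μ ht]
  rw [← mul_assoc, ← mul_assoc, ← ENNReal.ofReal_mul (by positivity), hpow,
    ENNReal.ofReal_mul (by positivity)]

theorem exists_lintegral_enorm_rpow_mul_sq_enorm_charFun_le [Nontrivial V] {s : ℝ} (hs : 0 < s) :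
    ∃ C : ℝ≥0, ∀ (μ : Measure V) [IsFiniteMeasure μ],
      ∫⁻ ξ, ‖ξ‖ₑ ^ (s - finrank ℝ V) * ‖charFun μ ξ‖ₑ ^ 2 ≤ C * rieszEnergy s μ := by
  obtain ⟨C, hC⟩ := exists_lintegral_enorm_rpow_mul_le (volume : Measure V) (s - finrank ℝ V)
  refine ⟨C * ((4 * Real.pi) ^ (finrank ℝ V / 2 : ℝ)).toNNReal * (Real.Gamma (s / 2)).toNNReal,
    fun μ _ => (hC _ (by fun_prop)).trans ?_⟩
  rw [lintegral_rpow_mul_lintegral_sq_enorm_charFun_mul_exp, ENNReal.coe_mul, ENNReal.coe_mul,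
    mul_assoc, mul_assoc]
  refine mul_le_mul_right (mul_le_mul_right ?_ _) _
  exact lintegral_lintegral_rpow_mul_exp_neg_le_rieszEnergy hs μ

end Energy

section Decay

lemma setLIntegral_one_le_norm_enorm_rpow_neg_lt_top {V : Type*} [NormedAddCommGroup V]
    [NormedSpace ℝ V] [FiniteDimensional ℝ V] [MeasurableSpace V] [BorelSpace V] (μ : Measure V)
    [μ.IsAddHaarMeasure] {r : ℝ} (hr : finrank ℝ V < r) :
    ∫⁻ x in {x : V | 1 ≤ ‖x‖}, ‖x‖ₑ ^ (-r) ∂μ < ∞ := by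
  have hr0 : 0 < r := (finrank ℝ V).cast_nonneg.trans_lt hr
  have hle {x : V} (hx : 1 ≤ ‖x‖) :
      ‖x‖ₑ ^ (-r) ≤ ENNReal.ofReal (2 ^ r) * ENNReal.ofReal ((1 + ‖x‖) ^ (-r)) := by
    have hx0 : 0 < ‖x‖ := zero_lt_one.trans_le hx
    rw [← ofReal_norm, ENNReal.ofReal_rpow_of_pos hx0, ← ENNReal.ofReal_mul (by positivity)]
    refine ENNReal.ofReal_le_ofReal ?_
    calc ‖x‖ ^ (-r) ≤ ((1 + ‖x‖) / 2) ^ (-r) :=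
          Real.rpow_le_rpow_of_nonpos (by positivity) (by linarith) (neg_nonpos.2 hr0.le)
      _ = 2 ^ r * (1 + ‖x‖) ^ (-r) := by
          rw [Real.div_rpow (by positivity) zero_le_two, Real.rpow_neg zero_le_two, div_inv_eq_mul,
            mul_comm]
  calc ∫⁻ x in {x : V | 1 ≤ ‖x‖}, ‖x‖ₑ ^ (-r) ∂μ
      ≤ ∫⁻ x in {x : V | 1 ≤ ‖x‖},
          ENNReal.ofReal (2 ^ r) * ENNReal.ofReal ((1 + ‖x‖) ^ (-r)) ∂μ :=
        setLIntegral_mono' (measurableSet_le measurable_const measurable_norm) fun x hx => hle hx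
    _ ≤ ∫⁻ x, ENNReal.ofReal (2 ^ r) * ENNReal.ofReal ((1 + ‖x‖) ^ (-r)) ∂μ :=
        setLIntegral_le_lintegral _ _
    _ < ∞ := by
        rw [lintegral_const_mul' _ _ ENNReal.ofReal_ne_top]
        exact ENNReal.mul_lt_top ENNReal.ofReal_lt_top (finite_integral_one_add_norm hr)

lemma setLIntegral_one_le_abs_eq_two_mul {f : ℝ → ℝ≥0∞} (hf : f.Even) :
    ∫⁻ r in {r | 1 ≤ |r|}, f r = 2 * ∫⁻ r in Ici 1, f r := by
  have hset : {r : ℝ | 1 ≤ |r|} = Ici 1 ∪ Iic (-1) := by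
    ext r
    simp only [mem_ofPred_eq, le_abs, mem_union, mem_Ici, mem_Iic, le_neg]
  have hdisj : Disjoint (Ici (1 : ℝ)) (Iic (-1)) :=
    (Iic_disjoint_Ici.2 (by norm_num)).symm
  have hneg : ∫⁻ r in Iic (-1), f r = ∫⁻ r in Ici 1, f r := by
    have h := (Measure.measurePreserving_neg (volume : Measure ℝ)).setLIntegral_comp_preimage_emb
      (MeasurableEquiv.neg ℝ).measurableEmbedding f (Ici 1)
    simpa only [hf _, neg_preimage, neg_Ici] using h
  rw [hset, lintegral_union measurableSet_Iic hdisj, hneg, two_mul]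

lemma ae_integrable_smul_of_lintegral_ne_top {V F : Type*} [NormedAddCommGroup V]
    [NormedSpace ℝ V] [SecondCountableTopology V] [MeasurableSpace V] [BorelSpace V]
    [NormedAddCommGroup F] {f : V → F} (hf : Continuous f) {ρ : Measure V}
    (h : ∫⁻ e, (∫⁻ r in {r : ℝ | 1 ≤ |r|}, ‖f (r • e)‖ₑ) ∂ρ ≠ ∞) :
    ∀ᵐ e ∂ρ, Integrable fun r : ℝ => f (r • e) := by
  have hmeas : Measurable fun e : V => ∫⁻ r in {r : ℝ | 1 ≤ |r|}, ‖f (r • e)‖ₑ :=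
    Measurable.lintegral_prod_right' (f := fun p : V × ℝ => ‖f (p.2 • p.1)‖ₑ)
      (Continuous.measurable (by fun_prop))
  filter_upwards [ae_lt_top hmeas h] with e he
  have hline : Continuous fun r : ℝ => f (r • e) := by fun_prop
  have htail : IntegrableOn (fun r : ℝ => f (r • e)) {r | 1 ≤ |r|} :=
    ⟨hline.aestronglyMeasurable, he⟩
  have hcover : {r : ℝ | 1 ≤ |r|} ∪ Icc (-1) 1 = univ :=
    eq_univ_of_forall fun r => (le_total 1 |r|).imp id abs_le.1
  rw [← integrableOn_univ, ← hcover]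
  exact htail.union hline.integrableOn_Icc

end Decay

section SphereFourier

variable {V : Type*} [NormedAddCommGroup V] [InnerProductSpace ℝ V] [FiniteDimensional ℝ V]
  [MeasurableSpace V] [BorelSpace V] {d : ℕ}

theorem exists_setLIntegral_enorm_rpow_mul_enorm_charFun_le [Nontrivial V] {s : ℝ} (hs : 2 < s) :
    ∃ C : ℝ≥0, ∀ (μ : Measure V) [IsFiniteMeasure μ],
      ∫⁻ ξ in {ξ | 1 ≤ ‖ξ‖}, ‖ξ‖ₑ ^ (1 - finrank ℝ V : ℝ) * ‖charFun μ ξ‖ₑ ≤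
        C * rieszEnergy s μ ^ (1 / 2 : ℝ) := by
  obtain ⟨C, hC⟩ := exists_lintegral_enorm_rpow_mul_sq_enorm_charFun_le (V := V)
    (zero_lt_two.trans hs)
  set D : ℝ≥0∞ := ∫⁻ ξ in {ξ : V | 1 ≤ ‖ξ‖}, ‖ξ‖ₑ ^ (-(finrank ℝ V + (s - 2)) : ℝ)
  have hD : D ≠ ∞ := (setLIntegral_one_le_norm_enorm_rpow_neg_lt_top volume (by linarith)).ne
  have hsq {q : ℝ} (x : ℝ≥0∞) : (x ^ (q / 2)) ^ (2 : ℝ) = x ^ q := by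
    rw [← ENNReal.rpow_mul, div_mul_cancel₀ _ two_ne_zero]
  refine ⟨C ^ (1 / 2 : ℝ) * D.toNNReal ^ (1 / 2 : ℝ), fun μ _ => ?_⟩
  calc ∫⁻ ξ in {ξ | 1 ≤ ‖ξ‖}, ‖ξ‖ₑ ^ (1 - finrank ℝ V : ℝ) * ‖charFun μ ξ‖ₑ
      = ∫⁻ ξ in {ξ | 1 ≤ ‖ξ‖}, (‖ξ‖ₑ ^ ((s - finrank ℝ V) / 2) * ‖charFun μ ξ‖ₑ) *
          ‖ξ‖ₑ ^ (-(finrank ℝ V + (s - 2)) / 2) := by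
        refine setLIntegral_congr_fun (measurableSet_le measurable_const measurable_norm)
          fun ξ (hξ : 1 ≤ ‖ξ‖) => ?_
        have hξ0 : ‖ξ‖ₑ ≠ 0 := enorm_ne_zero.2 (norm_pos_iff.1 (zero_lt_one.trans_le hξ))
        rw [mul_right_comm, ← ENNReal.rpow_add _ _ hξ0 enorm_ne_top]
        ring_nf
    _ ≤ (∫⁻ ξ in {ξ | 1 ≤ ‖ξ‖},
          (‖ξ‖ₑ ^ ((s - finrank ℝ V) / 2) * ‖charFun μ ξ‖ₑ) ^ (2 : ℝ)) ^ (1 / 2 : ℝ) *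
          (∫⁻ ξ in {ξ : V | 1 ≤ ‖ξ‖},
            (‖ξ‖ₑ ^ (-(finrank ℝ V + (s - 2)) / 2)) ^ (2 : ℝ)) ^ (1 / 2 : ℝ) :=
        ENNReal.lintegral_mul_le_Lp_mul_Lq _ .two_two (by fun_prop) (by fun_prop)
    _ ≤ (C * rieszEnergy s μ) ^ (1 / 2 : ℝ) * D ^ (1 / 2 : ℝ) := by
        simp only [hsq, ENNReal.mul_rpow_of_nonneg _ _ zero_le_two, ENNReal.rpow_two]
        gcongr
        exact (setLIntegral_le_lintegral _ _).trans (hC μ)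
    _ = _ := by
        rw [ENNReal.mul_rpow_of_nonneg _ _ (by positivity), ENNReal.coe_mul,
          ENNReal.coe_rpow_of_nonneg _ (by positivity),
          ENNReal.coe_rpow_of_nonneg _ (by positivity), ENNReal.coe_toNNReal hD, mul_right_comm]

theorem exists_lintegral_sphere_lintegral_enorm_charFun_le (hd : finrank ℝ V = d + 1) {s : ℝ}
    (hs : 2 < s) :
    ∃ C : ℝ≥0, ∀ (μ : Measure V) [IsFiniteMeasure μ],
      ∫⁻ e in sphere (0 : V) 1, (∫⁻ r in {r : ℝ | 1 ≤ |r|}, ‖charFun μ (r • e)‖ₑ) ∂μH[d] ≤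
        C * rieszEnergy s μ ^ (1 / 2 : ℝ) := by
  have : Nontrivial V := nontrivial_of_finrank_pos (R := ℝ) (hd ▸ d.succ_pos)
  have := isAddHaarMeasure_hausdorffMeasure_of_finrank_eq hd
  obtain ⟨C, hC⟩ := exists_setLIntegral_enorm_rpow_mul_enorm_charFun_le (V := V) hs
  set κ : ℝ≥0 := Measure.addHaarScalarFactor (μH[d + 1] : Measure V) volume
  have hκ : (μH[d + 1] : Measure V) = κ • volume := Measure.isAddLeftInvariant_eq_smul _ _
  refine ⟨2 * κ * C, fun μ _ => ?_⟩
  have heven (e : V) : (fun r : ℝ => ‖charFun μ (r • e)‖ₑ).Even := fun r => by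
    simp only
    rw [neg_smul, charFun_neg, RCLike.enorm_conj]
  calc ∫⁻ e in sphere (0 : V) 1, (∫⁻ r in {r : ℝ | 1 ≤ |r|}, ‖charFun μ (r • e)‖ₑ) ∂μH[d]
      = 2 * ∫⁻ e : sphere (0 : V) 1, (∫⁻ r in Ici (1 : ℝ), ‖charFun μ (r • e.1)‖ₑ) ∂μH[d] := by
        simp only [fun e => setLIntegral_one_le_abs_eq_two_mul (heven e)]
        rw [lintegral_const_mul' _ _ ENNReal.ofNat_ne_top,
          setLIntegral_hausdorffMeasure_eq isClosed_sphere.measurableSet d.cast_nonneg]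
    _ ≤ 2 * ∫⁻ x in {x | 1 ≤ ‖x‖}, ‖x‖ₑ ^ (-d : ℝ) * ‖charFun μ x‖ₑ ∂μH[d + 1] := by
        gcongr
        exact lintegral_sphere_lintegral_Ici_le hd (by fun_prop)
    _ = 2 * (κ * ∫⁻ x in {x | 1 ≤ ‖x‖}, ‖x‖ₑ ^ (1 - finrank ℝ V : ℝ) * ‖charFun μ x‖ₑ) := by
        rw [hκ, Measure.restrict_smul, lintegral_smul_measure, ENNReal.smul_def, smul_eq_mul, hd]
        push_cast
        ring_nf
    _ ≤ 2 * (κ * (C * rieszEnergy s μ ^ (1 / 2 : ℝ))) := by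
        gcongr
        exact hC μ
    _ = _ := by
        push_cast
        ring

end SphereFourier

section EuclideanSpace

lemma rieszEnergy_map_smul_le {V : Type*} [NormedAddCommGroup V] [NormedSpace ℝ V]
    [MeasurableSpace V] [BorelSpace V] {s c : ℝ} (hs : 0 ≤ s) (hc : 1 ≤ |c|) (μ : Measure V) :
    rieszEnergy s (μ.map (c • ·)) ≤ rieszEnergy s μ := by
  have hc0 : c ≠ 0 := abs_pos.1 (zero_lt_one.trans_le hc)
  have hemb : MeasurableEmbedding (c • · : V → V) := measurableEmbedding_const_smul₀ hc0
  have hnorm (x y : V) : ‖x - y‖ₑ ≤ ‖c • x - c • y‖ₑ := by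
    rw [← smul_sub, enorm_smul]
    refine le_mul_of_one_le_left' ?_
    rwa [← ofReal_norm, ENNReal.one_le_ofReal]
  simp only [rieszEnergy, hemb.lintegral_map, ENNReal.rpow_neg]
  gcongr with x y
  exact hnorm x y

variable {n : ℕ}

lemma ftm_eq_charFun_map_smul (μ : Measure (EuclideanSpace ℝ (Fin n))) :
    ftm n μ = charFun (μ.map ((-(2 * Real.pi)) • ·)) := by
  ext ξ
  rw [charFun_map_smul, charFun_apply, ftm]
  simp only [real_inner_smul_right, real_inner_comm, neg_mul]

theorem stmt_19_general (hn : n ≠ 0) {s : ℝ} (hs : 2 < s) :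
    ∃ C : ℝ, 0 < C ∧
      ∀ μ : Measure (EuclideanSpace ℝ (Fin n)),
        IsFiniteMeasure μ → energyI n s μ < ∞ →
        (∀ᵐ e ∂(μH[(n : ℝ) - 1].restrict
            (sphere (0 : EuclideanSpace ℝ (Fin n)) 1)),
          Integrable (fun r : ℝ => ftm n μ (r • e)) volume) ∧
        (∫⁻ e in sphere (0 : EuclideanSpace ℝ (Fin n)) 1,
            (∫⁻ r in {r : ℝ | 1 ≤ |r|}, ‖ftm n μ (r • e)‖ₑ)
              ∂μH[(n : ℝ) - 1]) ≤
          ENNReal.ofReal C * (energyI n s μ) ^ (1 / 2 : ℝ) := by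
  obtain ⟨d, rfl⟩ := Nat.exists_eq_succ_of_ne_zero hn
  obtain ⟨C, hC⟩ := exists_lintegral_sphere_lintegral_enorm_charFun_le
    (finrank_euclideanSpace_fin (𝕜 := ℝ) (n := d + 1)) hs
  rw [show ((d.succ : ℕ) : ℝ) - 1 = d by simp]
  refine ⟨C ⊔ 1, by positivity, fun μ _ hμ => ?_⟩
  rw [ftm_eq_charFun_map_smul]
  set ν := μ.map ((-(2 * Real.pi)) • ·)
  have hbound : ∫⁻ e in sphere (0 : EuclideanSpace ℝ (Fin (d + 1))) 1,
      (∫⁻ r in {r : ℝ | 1 ≤ |r|}, ‖charFun ν (r • e)‖ₑ) ∂μH[d] ≤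
        ENNReal.ofReal (C ⊔ 1) * energyI (d + 1) s μ ^ (1 / 2 : ℝ) := by
    refine (hC ν).trans ?_
    gcongr
    · rw [← ENNReal.ofReal_coe_nnreal]
      exact ENNReal.ofReal_le_ofReal le_sup_left
    · refine rieszEnergy_map_smul_le (by linarith) ?_ μ
      rw [abs_neg, abs_of_pos Real.two_pi_pos]
      linarith [Real.pi_gt_three]
  refine ⟨ae_integrable_smul_of_lintegral_ne_top continuous_charFun
    (ne_top_of_le_ne_top ?_ hbound), hbound⟩
  finiteness [hμ.ne]

end EuclideanSpace

theorem stmt_19 (n : ℕ) (hn : 3 ≤ n) (s : ℝ) (hs : 2 < s) :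
    ∃ C : ℝ, 0 < C ∧
      ∀ μ : Measure (EuclideanSpace ℝ (Fin n)),
        IsFiniteMeasure μ → IsCompact (sptm n μ) → energyI n s μ < ∞ →
        (∀ᵐ e ∂(μH[(n : ℝ) - 1].restrict
            (sphere (0 : EuclideanSpace ℝ (Fin n)) 1)),
          Integrable (fun r : ℝ => ftm n μ (r • e)) volume) ∧
        (∫⁻ e in sphere (0 : EuclideanSpace ℝ (Fin n)) 1,
            (∫⁻ r in {r : ℝ | 1 ≤ |r|}, (‖ftm n μ (r • e)‖₊ : ℝ≥0∞))
              ∂μH[(n : ℝ) - 1]) ≤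
          ENNReal.ofReal C * (energyI n s μ) ^ (1/2 : ℝ) := by
  obtain ⟨C, hC, h⟩ := stmt_19_general (by omega : n ≠ 0) hs
  exact ⟨C, hC, fun μ hμ _ hE => h μ hμ hE⟩
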